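/- Let p, q, r ∈ X ∪ G with time(q) < time(p) and key(q) < key(p), and suppose r hides q from p. Suppose some point of X ∪ G below q has time greater than time(r) and key less than key(r), and let s be such a point with the smallest time. Then key(OP(s)) < key(r) and time(OP(s)) > time(r). -/

import Mathlib

open Finset

attribute [local instance] Classical.propDecidable

/-- A point in the plane: first coordinate is the key, second is the time. -/
abbrev Pt : Type := ℤ × ℤ

/-- `r` lies in the closed axis-parallel rectangle with opposite corners `p` and `q`. -/
def inRect (p q r : Pt) : Prop :=
  min p.1 q.1 ≤ r.1 ∧ r.1 ≤ max p.1 q.1 ∧ min p.2 q.2 ≤ r.2 ∧ r.2 ≤ max p.2 q.2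

/-- `r` lies in the open axis-parallel rectangle with opposite corners `p` and `q`. -/
def inOpenRect (p q r : Pt) : Prop :=
  min p.1 q.1 < r.1 ∧ r.1 < max p.1 q.1 ∧ min p.2 q.2 < r.2 ∧ r.2 < max p.2 q.2

/-- `S` is an arborally satisfied set. -/
def ArbSat (S : Finset Pt) : Prop :=
  ∀ p ∈ S, ∀ q ∈ S, p.1 = q.1 ∨ p.2 = q.2 ∨ ∃ r ∈ S, r ≠ p ∧ r ≠ q ∧ inRect p q r

/-- `X` is the permutation point set `{(σ(t), t) : 1 ≤ t ≤ n}` of some permutation `σ` of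
`{1, …, n}`. -/
def IsPermPointSet (n : ℕ) (X : Finset Pt) : Prop :=
  ∃ σ : Equiv.Perm (Fin n),
    X = Finset.univ.image (fun t : Fin n => ((((σ t : ℕ) : ℤ) + 1, ((t : ℕ) : ℤ) + 1) : Pt))

/-- The points added by GREEDY at time `t`, given the point set `X` and the set `G` of points
added before time `t`: for the point `p` of `X` with time `t` and each point `q` of time `< t`
with a different key such that the rectangle spanned by `p` and `q` contains no other point of
time `< t`, the point `(key q, t)` is added. -/
noncomputable def greedyStep (X G : Finset Pt) (t : ℤ) : Finset Pt :=
  (X.filter (fun p => p.2 = t)).biUnion (fun p =>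
    (((X ∪ G).filter (fun s => s.2 < t)).filter (fun q =>
      q.1 ≠ p.1 ∧ ∀ r ∈ (X ∪ G).filter (fun s => s.2 < t), inRect p q r → r = q)).image
      (fun q => ((q.1, t) : Pt)))

/-- All points added by GREEDY while processing times `1, …, t`. -/
noncomputable def greedyUpTo (X : Finset Pt) : ℕ → Finset Pt
  | 0 => ∅
  | t + 1 => greedyUpTo X t ∪ greedyStep X (greedyUpTo X t) ((t : ℤ) + 1)

/-- The set `G` of points added by GREEDY over the whole execution on a permutation point set
`X` of size `n`. -/
noncomputable def greedyG (n : ℕ) (X : Finset Pt) : Finset Pt := greedyUpTo X n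

/-- `OP r` is the point of `X` processed at the time at which `r` was added; for `r ∈ X`,
`OP r = r`. -/
noncomputable def OP (X : Finset Pt) (r : Pt) : Pt :=
  ((X.filter (fun p => p.2 = r.2)).toList).headI

/-- The first point of `S` above `p`: the point of `S` with the same key as `p`, smaller time,
and the largest such time. -/
noncomputable def firstAbove (S : Finset Pt) (p : Pt) : Pt :=
  (p.1, (((S.filter (fun q => q.1 = p.1 ∧ q.2 < p.2)).image Prod.snd).max).unbotD 0)

/-- The pair `CP(p) = (OP(p), OP(q))` where `q` is the first point of `X ∪ G` above `p`. -/
noncomputable def CP (X G : Finset Pt) (p : Pt) : Pt × Pt :=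
  (OP X p, OP X (firstAbove (X ∪ G) p))

/-- `CP(p) ∈ MMC` (*zig*). -/
def inMMC (X G : Finset Pt) (p : Pt) : Prop :=
  ((CP X G p).1.1 < p.1 ∧ (CP X G p).2.1 < (CP X G p).1.1 ∧ (CP X G p).2.2 < (CP X G p).1.2)
  ∨ (p.1 < (CP X G p).1.1 ∧ (CP X G p).1.1 < (CP X G p).2.1 ∧ (CP X G p).2.2 < (CP X G p).1.2)

/-- `CP(p) ∈ MFC` (*zag*). -/
def inMFC (X G : Finset Pt) (p : Pt) : Prop :=
  ((CP X G p).1.1 < p.1 ∧ p.1 ≤ (CP X G p).2.1 ∧ (CP X G p).2.2 < p.2)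
  ∨ (p.1 < (CP X G p).1.1 ∧ (CP X G p).2.1 ≤ p.1 ∧ (CP X G p).2.2 < p.2)

/-- A pair is good if no point of `X` lies in the open rectangle spanned by it. -/
def IsGoodPair (X : Finset Pt) (pr : Pt × Pt) : Prop :=
  ∀ r ∈ X, ¬ inOpenRect pr.1 pr.2 r

/-- `B` is a block of `X`: the set of points of `X` whose times lie in some interval, whose
keys form a set of consecutive integers; blocks are nonempty. -/
def IsBlock (X B : Finset Pt) : Prop :=
  B.Nonempty ∧ (∃ i j : ℤ, B = X.filter (fun p => i ≤ p.2 ∧ p.2 ≤ j)) ∧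
    ∃ c d : ℤ, B.image Prod.fst = Finset.Icc c d

/-- `Top(B)`: the point of `B` with the smallest time. -/
noncomputable def TopPt (B : Finset Pt) : Pt :=
  ((B.filter (fun p => ∀ q ∈ B, p.2 ≤ q.2)).toList).headI

/-- A decomposition tree of `X`: a rooted tree whose nodes are blocks of `X`, whose root is
`X`, whose leaves are exactly the singleton blocks, and in which the children of every
internal node partition it. -/
structure DecompTree (X : Finset Pt) where
  nodes : Finset (Finset Pt)
  parent : Finset Pt → Finset Pt
  isBlock_nodes : ∀ B ∈ nodes, IsBlock X B
  root_mem : X ∈ nodes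
  parent_mem : ∀ B ∈ nodes, B ≠ X → parent B ∈ nodes
  ssubset_parent : ∀ B ∈ nodes, B ≠ X → B ⊂ parent B
  leaf_iff : ∀ B ∈ nodes, (¬ ∃ C ∈ nodes, C ≠ X ∧ parent C = B) ↔ B.card = 1
  children_partition : ∀ B ∈ nodes, B.card ≠ 1 →
    ∀ x ∈ B, ∃! C, C ∈ nodes ∧ C ≠ X ∧ parent C = B ∧ x ∈ C

/-- The children of a node `B` in a decomposition tree. -/
noncomputable def DecompTree.children {X : Finset Pt} (T : DecompTree X) (B : Finset Pt) :
    Finset (Finset Pt) :=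
  T.nodes.filter (fun C => C ≠ X ∧ T.parent C = B)

/-- `X` is `k`-decomposable: it admits a decomposition tree in which every node has at most
`k` children. -/
def kDecomposable (k : ℕ) (X : Finset Pt) : Prop :=
  ∃ T : DecompTree X, ∀ B ∈ T.nodes, (T.children B).card ≤ k

/-- `RT(p)`: the node of the decomposition tree closest to the root (i.e. containing all
others) among the nodes `B` with `Top(B) = p`. -/
noncomputable def RT {X : Finset Pt} (T : DecompTree X) (p : Pt) : Finset Pt :=
  (((T.nodes.filter (fun B => TopPt B = p)).filter
      (fun B => ∀ C ∈ T.nodes, TopPt C = p → C ⊆ B)).toList).headI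

/-- The points added by GREEDY (`G`) while processing `Top(B)` that lie to the left of
`Top(B)`. -/
noncomputable def leftSet (G B : Finset Pt) : Finset Pt :=
  G.filter (fun s => s.2 = (TopPt B).2 ∧ s.1 < (TopPt B).1)

/-- `Left(B)`: among the points added by GREEDY while processing `Top(B)` with key less than
`key (Top B)`, the one with the largest key (junk if none exists). -/
noncomputable def leftPt (G B : Finset Pt) : Pt :=
  (((leftSet G B).filter (fun s => ∀ r ∈ leftSet G B, r.1 ≤ s.1)).toList).headI

/-- The points added by GREEDY (`G`) while processing `Top(B)` that lie to the right of
`Top(B)`. -/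
noncomputable def rightSet (G B : Finset Pt) : Finset Pt :=
  G.filter (fun s => s.2 = (TopPt B).2 ∧ (TopPt B).1 < s.1)

/-- `Right(B)`: among the points added by GREEDY while processing `Top(B)` with key greater
than `key (Top B)`, the one with the smallest key (junk if none exists). -/
noncomputable def rightPt (G B : Finset Pt) : Pt :=
  (((rightSet G B).filter (fun s => ∀ r ∈ rightSet G B, s.1 ≤ r.1)).toList).headI

theorem IsPermPointSet.eq_of_snd_eq {n : ℕ} {X : Finset Pt} (hX : IsPermPointSet n X) {a b : Pt}
    (ha : a ∈ X) (hb : b ∈ X) (h : a.2 = b.2) : a = b := by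
  obtain ⟨σ, rfl⟩ := hX
  simp only [Finset.mem_image, Finset.mem_univ, true_and] at ha hb
  obtain ⟨i, rfl⟩ := ha
  obtain ⟨j, rfl⟩ := hb
  have hij : i = j := Fin.ext (by simpa using h)
  rw [hij]

theorem IsPermPointSet.OP_eq {n : ℕ} {X : Finset Pt} (hX : IsPermPointSet n X) {o s : Pt}
    (ho : o ∈ X) (h : o.2 = s.2) : OP X s = o := by
  have hfilter : X.filter (fun p => p.2 = s.2) = {o} := by
    ext a
    simp only [Finset.mem_filter, Finset.mem_singleton]
    constructor
    · rintro ⟨ha, has⟩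
      exact hX.eq_of_snd_eq ha ho (has.trans h.symm)
    · rintro rfl
      exact ⟨ho, h⟩
  simp [OP, hfilter]

theorem greedyUpTo_mono (X : Finset Pt) : Monotone (greedyUpTo X) :=
  monotone_nat_of_le_succ fun _ => Finset.subset_union_left

theorem exists_mem_greedyStep {X : Finset Pt} {n : ℕ} {r : Pt} (hr : r ∈ greedyUpTo X n) :
    ∃ k < n, r ∈ greedyStep X (greedyUpTo X k) ((k : ℤ) + 1) := by
  induction n with
  | zero => simp [greedyUpTo] at hr
  | succ m ih =>
    rcases Finset.mem_union.1 hr with h | h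
    · obtain ⟨k, hk, hrk⟩ := ih h
      exact ⟨k, hk.trans m.lt_succ_self, hrk⟩
    · exact ⟨m, m.lt_succ_self, h⟩

theorem mem_greedyStep {X G : Finset Pt} {t : ℤ} {s : Pt} :
    s ∈ greedyStep X G t ↔ s.2 = t ∧ ∃ o ∈ X, o.2 = t ∧ ∃ q ∈ X ∪ G, q.2 < t ∧ q.1 = s.1 ∧
      q.1 ≠ o.1 ∧ ∀ r ∈ X ∪ G, r.2 < t → inRect o q r → r = q := by
  simp only [greedyStep, Finset.mem_biUnion, Finset.mem_filter, Finset.mem_image]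
  constructor
  · rintro ⟨o, ⟨ho, hot⟩, q, ⟨⟨hq, hqt⟩, hqo, hempty⟩, rfl⟩
    exact ⟨rfl, o, ho, hot, q, hq, hqt, rfl, hqo, fun r hr hrt => hempty r ⟨hr, hrt⟩⟩
  · rintro ⟨hst, o, ho, hot, q, hq, hqt, hqs, hqo, hempty⟩
    exact ⟨o, ⟨ho, hot⟩, q, ⟨⟨hq, hqt⟩, hqo, fun r hr => hempty r hr.1 hr.2⟩,
      Prod.ext hqs hst.symm⟩

theorem mem_greedyUpTo_of_snd_lt {X : Finset Pt} {n k : ℕ} {r : Pt} (hr : r ∈ greedyUpTo X n)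
    (h : r.2 < (k : ℤ) + 1) : r ∈ greedyUpTo X k := by
  obtain ⟨m, -, hm⟩ := exists_mem_greedyStep hr
  have hrm := (mem_greedyStep.1 hm).1
  exact greedyUpTo_mono X (show m + 1 ≤ k by omega) (Finset.mem_union_right _ hm)

/-- A point added by GREEDY is witnessed by an earlier point of the same key which, together with
the processed point, spans a rectangle free of other earlier points of the final set. -/
theorem exists_empty_rect_of_mem_greedyG {X : Finset Pt} {n : ℕ} {s : Pt}
    (hs : s ∈ greedyG n X) :
    ∃ o ∈ X, o.2 = s.2 ∧ ∃ q ∈ X ∪ greedyG n X, q.2 < s.2 ∧ q.1 = s.1 ∧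
      ∀ r ∈ X ∪ greedyG n X, r.2 < s.2 → inRect o q r → r = q := by
  obtain ⟨k, hk, hsk⟩ := exists_mem_greedyStep hs
  obtain ⟨hst, o, ho, hot, q, hq, hqt, hqs, -, hempty⟩ := mem_greedyStep.1 hsk
  rw [← hst] at hot hqt hempty
  refine ⟨o, ho, hot, q, Finset.union_subset_union_right (greedyUpTo_mono X hk.le) hq, hqt, hqs,
    fun r hr hrs => hempty r ?_ hrs⟩
  rcases Finset.mem_union.1 hr with h | h
  · exact Finset.mem_union_left _ h
  · exact Finset.mem_union_right _ (mem_greedyUpTo_of_snd_lt h (hst ▸ hrs))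

/-- hiding lemma, north-west version. Let `p, q, r ∈ X ∪ G` with
`time(q) < time(p)` and `key(q) < key(p)`, and suppose `r` hides `q` from `p` (i.e. `r`
lies on the top line or in the interior of the rectangle spanned by `q` and `p`). If `s` is
the point of `X ∪ G` of smallest time among those below `q` with time greater than `time(r)`
and key less than `key(r)`, then `key(OP(s)) < key(r)` and `time(OP(s)) > time(r)`. -/
theorem hidden_lemma (n : ℕ) (X : Finset Pt) (hX : IsPermPointSet n X)
    (p q r s : Pt)
    (hp : p ∈ X ∪ greedyG n X) (hq : q ∈ X ∪ greedyG n X) (hr : r ∈ X ∪ greedyG n X)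
    (ht : q.2 < p.2) (hk : q.1 < p.1)
    (hhide : (r.2 = q.2 ∧ q.1 < r.1 ∧ inRect q p r) ∨ inOpenRect q p r)
    (hs : s ∈ X ∪ greedyG n X) (hs1 : s.1 = q.1) (hs2 : q.2 < s.2)
    (hs3 : r.2 < s.2) (hs4 : s.1 < r.1)
    (hmin : ∀ s' ∈ X ∪ greedyG n X,
      s'.1 = q.1 → q.2 < s'.2 → r.2 < s'.2 → s'.1 < r.1 → s.2 ≤ s'.2) :
    (OP X s).1 < r.1 ∧ r.2 < (OP X s).2 := by
  rcases Finset.mem_union.1 hs with hsX | hsG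
  · rw [hX.OP_eq hsX rfl]
    exact ⟨hs4, hs3⟩
  obtain ⟨o, ho, hos, q', hq', hq's, hq's1, hempty⟩ := exists_empty_rect_of_mem_greedyG hsG
  rw [hX.OP_eq ho hos]
  refine ⟨?_, hos ▸ hs3⟩
  by_contra! hor
  have hqr : q.2 ≤ r.2 := by
    rcases hhide with h | ⟨-, -, h, -⟩
    · exact h.1.ge
    · exact (min_eq_left ht.le ▸ h).le
  have hq'r : q'.2 ≤ r.2 := by
    by_contra! h
    have := hmin q' hq' (hq's1.trans hs1) (hqr.trans_lt h) h (hq's1 ▸ hs4)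
    omega
  have hrq' : r = q' := hempty r hr hs3
    ⟨min_le_of_right_le (by omega), le_max_of_le_left hor, min_le_of_right_le hq'r,
      le_max_of_le_left (by omega)⟩
  subst hrq'
  omega
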